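/- arXiv:2505.22388 — 2 statements merged into one kernel-verified Lean document; each statement's English description precedes it below -/
import Mathlib

section
/- Let T, L, N ≥ 1 be integers, let F₀ ∈ ℝ^{T×L} with F₀ᵀF₀ invertible, and for i = 1, …, N+1 let λᵢ ∈ ℝ^L and εᵢ, ûᵢ ∈ ℝ^T; set ĉᵢ = F₀λᵢ + εᵢ + ûᵢ ∈ ℝ^T. Let w = (w₂, …, w_{N+1}) ∈ ℝ^N satisfy ∑_{i=2}^{N+1} wᵢ = 1 together with the perfect-fit equation ĉ₁ = ∑_{i=2}^{N+1} wᵢ ĉᵢ. Let f ∈ ℝ^L be arbitrary, and for each i let ε_{i,∗}, û_{i,∗} ∈ ℝ be arbitrary scalars; define c_{1,∗} = λ₁·f + ε_{1,∗}, ĉ_{i,∗} = λᵢ·f + ε_{i,∗} + û_{i,∗} for i = 2, …, N+1, and the row vector φ = fᵀ(F₀ᵀF₀)⁻¹F₀ᵀ ∈ ℝ^{1×T}. Then the exact identity holds: c_{1,∗} − ∑_{i=2}^{N+1} wᵢ ĉ_{i,∗} = φ(∑_{i=2}^{N+1} wᵢ ûᵢ) − φû₁ − ∑_{i=2}^{N+1}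 wᵢ û_{i,∗} + φ(∑_{i=2}^{N+1} wᵢ εᵢ) − φε₁ − ∑_{i=2}^{N+1} wᵢ(ε_{i,∗} − ε_{1,∗}). -/
/-!
`φ` is a linear functional, and since `F₀ᵀF₀` is invertible it satisfies `φ (F₀ x) = x · f`.
Applying `φ` to the perfect-fit equation therefore expresses `λ₁ · f - ∑ wᵢ (λᵢ · f)` through the
values of `φ` on the errors; `∑ wᵢ = 1` accounts for the `ε_{1,*}` term.
-/

open Matrix

/-- exact error decomposition identity for the synthetic control estimator.
Unit `1` is treated; the `N` control units are indexed by `Fin N` via `Fin.succ`.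
`φ v = fᵀ(F₀ᵀF₀)⁻¹F₀ᵀ v`.  Starred quantities refer to a single post-treatment period. -/
theorem statement10
    (T L N : ℕ) (hT : 1 ≤ T) (hL : 1 ≤ L) (hN : 1 ≤ N)
    (F₀ : Matrix (Fin T) (Fin L) ℝ) (hF₀ : IsUnit (F₀ᵀ * F₀))
    (lam : Fin (N + 1) → Fin L → ℝ)
    (eps uhat : Fin (N + 1) → Fin T → ℝ)
    (w : Fin N → ℝ) (hw1 : ∑ i : Fin N, w i = 1)
    -- perfect pre-treatment fit: ĉ₁ = ∑ᵢ wᵢ ĉᵢ, where ĉᵢ = F₀λᵢ + εᵢ + ûᵢ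
    (hfit : F₀ *ᵥ lam 0 + eps 0 + uhat 0 =
      ∑ i : Fin N, w i • (F₀ *ᵥ lam i.succ + eps i.succ + uhat i.succ))
    (f : Fin L → ℝ) (epsStar uhatStar : Fin (N + 1) → ℝ)
    (φ : (Fin T → ℝ) → ℝ) (hφ : ∀ v, φ v = f ⬝ᵥ ((F₀ᵀ * F₀)⁻¹ *ᵥ (F₀ᵀ *ᵥ v))) :
    -- c_{1,*} − ∑ᵢ wᵢ ĉ_{i,*}
    (lam 0 ⬝ᵥ f + epsStar 0) -
        ∑ i : Fin N, w i * (lam i.succ ⬝ᵥ f + epsStar i.succ + uhatStar i.succ) =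
      φ (∑ i : Fin N, w i • uhat i.succ) - φ (uhat 0) -
        (∑ i : Fin N, w i * uhatStar i.succ) +
        φ (∑ i : Fin N, w i • eps i.succ) - φ (eps 0) -
        ∑ i : Fin N, w i * (epsStar i.succ - epsStar 0) := by
  have hadd : ∀ x y, φ (x + y) = φ x + φ y := fun x y => by
    simp only [hφ, mulVec_add, dotProduct_add]
  have hsmul : ∀ (a : ℝ) x, φ (a • x) = a * φ x := fun a x => by
    simp only [hφ, mulVec_smul, dotProduct_smul, smul_eq_mul]
  have hsum : ∀ g : Fin N → Fin T → ℝ, φ (∑ i, w i • g i) = ∑ i, w i * φ (g i) := fun g => by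
    simp only [← hsmul]
    exact map_sum (⟨⟨φ, by simp [hφ]⟩, hadd⟩ : (Fin T → ℝ) →+ ℝ) _ _
  have hF : ∀ x, φ (F₀ *ᵥ x) = x ⬝ᵥ f := fun x => by
    rw [hφ, mulVec_mulVec, mulVec_mulVec, Matrix.mul_assoc,
      nonsing_inv_mul _ ((isUnit_iff_isUnit_det _).mp hF₀), one_mulVec, dotProduct_comm]
  have h := congrArg φ hfit
  simp only [hsum, hadd, hF] at h
  have hs : ∑ i, w i * epsStar 0 = epsStar 0 := by rw [← Finset.sum_mul, hw1, one_mul]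
  simp only [hsum, mul_add, mul_sub, Finset.sum_add_distrib, Finset.sum_sub_distrib, hs] at h ⊢
  linarith
end

section
/- Let T, L ≥ 1, let F ∈ ℝ^{T×L} have all entries bounded in absolute value by F̄ > 0, suppose the smallest eigenvalue of (1/T)FᵀF is at least ξ > 0, and let f ∈ ℝ^L with ‖f‖_∞ ≤ F̄. Denote by f_s ∈ ℝ^L the s-th row of F. Then for any m ≥ 1, any w ∈ ℝ^m, and any real array (u_{i,s})_{1≤i≤m, 1≤s≤T}: (∑_{i=1}^m wᵢ ∑_{s=1}^T fᵀ(FᵀF)⁻¹f_s · u_{i,s})² ≤ ((F̄²L/ξ)² / T) · (∑_{i=1}^m wᵢ²) · (∑_{i=1}^m ∑_{s=1}^T u_{i,s}²). -/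
/-!
Put `a = (FᵀF)⁻¹ f`, so that the weight `fᵀ(FᵀF)⁻¹fₛ` equals `a · fₛ`. The eigenvalue condition and
Cauchy–Schwarz give `ξ T ‖a‖² ≤ aᵀ(FᵀF)a = a · f ≤ ‖a‖ ‖f‖`, hence `‖a‖² ≤ F̄² L / (ξ T)²`.
Since `‖fₛ‖² ≤ F̄² L`, each squared weight is at most `(F̄² L)² / (ξ T)²`, and summing over the `T`
values of `s` gives `(F̄² L / ξ)² / T`. Two applications of Cauchy–Schwarz, over `i` and over `s`,
then bound the double sum.
-/

open Matrix

theorem sum_sq_le_of_abs_le {L : ℕ} (g : Fin L → ℝ) (B : ℝ) (hg : ∀ l, |g l| ≤ B) :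
    ∑ l, g l ^ 2 ≤ B ^ 2 * L := by
  calc ∑ l, g l ^ 2 ≤ ∑ _l : Fin L, B ^ 2 :=
        Finset.sum_le_sum fun l _ => sq_le_sq.mpr ((hg l).trans (le_abs_self B))
    _ = B ^ 2 * L := by simp [mul_comm]

/-- The bound `‖A⁻¹ f‖ ≤ ‖f‖ / c` for a matrix `A` whose quadratic form is at least `c‖·‖²`. -/
theorem sq_mul_sum_sq_le {L : ℕ} (A : Matrix (Fin L) (Fin L) ℝ) (c : ℝ) (hc : 0 < c)
    (hA : ∀ v : Fin L → ℝ, c * (∑ l, v l ^ 2) ≤ v ⬝ᵥ (A *ᵥ v))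
    (a f : Fin L → ℝ) (haf : A *ᵥ a = f) :
    c ^ 2 * ∑ l, a l ^ 2 ≤ ∑ l, f l ^ 2 := by
  have h1 := hA a
  rw [haf] at h1
  have hcs : (a ⬝ᵥ f) ^ 2 ≤ (∑ l, a l ^ 2) * ∑ l, f l ^ 2 :=
    Finset.sum_mul_sq_le_sq_mul_sq _ _ _
  have ha : 0 ≤ ∑ l, a l ^ 2 := Finset.sum_nonneg fun _ _ => sq_nonneg _
  have hf : 0 ≤ ∑ l, f l ^ 2 := Finset.sum_nonneg fun _ _ => sq_nonneg _
  have h2 : (c * ∑ l, a l ^ 2) ^ 2 ≤ (a ⬝ᵥ f) ^ 2 :=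
    pow_le_pow_left₀ (by positivity) h1 2
  rcases ha.eq_or_lt with h0 | h0
  · rw [← h0]; simpa using hf
  · refine le_of_mul_le_mul_left ?_ h0
    nlinarith

theorem isUnit_of_quadForm_lower {L : ℕ} (A : Matrix (Fin L) (Fin L) ℝ) (c : ℝ) (hc : 0 < c)
    (hA : ∀ v : Fin L → ℝ, c * (∑ l, v l ^ 2) ≤ v ⬝ᵥ (A *ᵥ v)) : IsUnit A := by
  rw [← Matrix.mulVec_injective_iff_isUnit]
  intro x y hxy
  have h0 : A *ᵥ (x - y) = 0 := by
    rw [Matrix.mulVec_sub]; exact sub_eq_zero.mpr hxy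
  have h := sq_mul_sum_sq_le A c hc hA (x - y) 0 h0
  have hnn : 0 ≤ ∑ l, (x - y) l ^ 2 := Finset.sum_nonneg fun _ _ => sq_nonneg _
  have hz : ∑ l, (x - y) l ^ 2 = 0 := by
    have hc2 : 0 < c ^ 2 := by positivity
    simp only [Pi.zero_apply, ne_eq, OfNat.ofNat_ne_zero, not_false_eq_true, zero_pow,
      Finset.sum_const_zero] at h
    nlinarith
  rw [Finset.sum_eq_zero_iff_of_nonneg fun _ _ => sq_nonneg _] at hz
  ext l
  exact sub_eq_zero.mp (pow_eq_zero_iff two_ne_zero |>.mp (hz l (Finset.mem_univ l)))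

/-- deterministic Cauchy–Schwarz bound controlling the weighted sums
`∑ᵢ wᵢ ∑ₛ fᵀ(FᵀF)⁻¹fₛ u_{i,s}` appearing in the synthetic control error decomposition.
The smallest-eigenvalue condition is stated equivalently as a quadratic-form lower bound;
`F s` denotes the `s`-th row of `F`. -/
theorem statement11
    (T L : ℕ) (hT : 1 ≤ T) (hL : 1 ≤ L)
    (F : Matrix (Fin T) (Fin L) ℝ) (Fbar ξ : ℝ) (hFbar : 0 < Fbar) (hξ : 0 < ξ)
    (hbdd : ∀ t l, |F t l| ≤ Fbar)
    (heig : ∀ v : Fin L → ℝ,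
      ξ * (∑ l, v l ^ 2) ≤ v ⬝ᵥ (((T : ℝ)⁻¹ • (Fᵀ * F)) *ᵥ v))
    (f : Fin L → ℝ) (hf : ∀ l, |f l| ≤ Fbar)
    (m : ℕ) (hm : 1 ≤ m) (w : Fin m → ℝ) (u : Fin m → Fin T → ℝ) :
    (∑ i : Fin m, w i * ∑ s : Fin T, (f ⬝ᵥ ((Fᵀ * F)⁻¹ *ᵥ F s)) * u i s) ^ 2 ≤
      ((Fbar ^ 2 * L / ξ) ^ 2 / T) * (∑ i : Fin m, w i ^ 2) *
        (∑ i : Fin m, ∑ s : Fin T, u i s ^ 2) := by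
  have hTpos : (0 : ℝ) < T := by exact_mod_cast hT
  have hc : 0 < ξ * T := by positivity
  have hG : ∀ v : Fin L → ℝ, (ξ * T) * (∑ l, v l ^ 2) ≤ v ⬝ᵥ ((Fᵀ * F) *ᵥ v) := by
    intro v
    have h := heig v
    rw [Matrix.smul_mulVec, dotProduct_smul, smul_eq_mul, inv_mul_eq_div,
      le_div_iff₀ hTpos] at h
    linarith
  have hdet : IsUnit (Fᵀ * F).det :=
    (Matrix.isUnit_iff_isUnit_det _).mp (isUnit_of_quadForm_lower _ _ hc hG)
  set a : Fin L → ℝ := (Fᵀ * F)⁻¹ *ᵥ f with ha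
  have hGa : (Fᵀ * F) *ᵥ a = f := by
    rw [ha, Matrix.mulVec_mulVec, Matrix.mul_nonsing_inv _ hdet, Matrix.one_mulVec]
  have hsymm : ((Fᵀ * F)⁻¹)ᵀ = (Fᵀ * F)⁻¹ := by
    rw [Matrix.transpose_nonsing_inv, Matrix.transpose_mul, Matrix.transpose_transpose]
  have hcoef : ∀ s, f ⬝ᵥ ((Fᵀ * F)⁻¹ *ᵥ F s) = a ⬝ᵥ F s := by
    intro s
    rw [Matrix.dotProduct_mulVec, ← Matrix.mulVec_transpose, hsymm]
  simp only [hcoef]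
  have hnorm : (ξ * T) ^ 2 * ∑ l, a l ^ 2 ≤ Fbar ^ 2 * L :=
    (sq_mul_sum_sq_le _ _ hc hG a f hGa).trans (sum_sq_le_of_abs_le f Fbar hf)
  have hterm : ∀ s, (a ⬝ᵥ F s) ^ 2 ≤ (Fbar ^ 2 * L) ^ 2 / (ξ * T) ^ 2 := by
    intro s
    have hcs : (a ⬝ᵥ F s) ^ 2 ≤ (∑ l, a l ^ 2) * ∑ l, F s l ^ 2 :=
      Finset.sum_mul_sq_le_sq_mul_sq _ _ _
    have hrow := sum_sq_le_of_abs_le (F s) Fbar (hbdd s)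
    rw [le_div_iff₀ (by positivity)]
    calc (a ⬝ᵥ F s) ^ 2 * (ξ * T) ^ 2
        ≤ ((∑ l, a l ^ 2) * ∑ l, F s l ^ 2) * (ξ * T) ^ 2 := by gcongr
      _ = ((ξ * T) ^ 2 * ∑ l, a l ^ 2) * ∑ l, F s l ^ 2 := by ring
      _ ≤ (Fbar ^ 2 * L) * (Fbar ^ 2 * L) := by gcongr
      _ = (Fbar ^ 2 * L) ^ 2 := by ring
  have hsum : ∑ s, (a ⬝ᵥ F s) ^ 2 ≤ (Fbar ^ 2 * L / ξ) ^ 2 / T := by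
    calc ∑ s, (a ⬝ᵥ F s) ^ 2 ≤ ∑ _s : Fin T, (Fbar ^ 2 * L) ^ 2 / (ξ * T) ^ 2 :=
          Finset.sum_le_sum fun s _ => hterm s
      _ = (Fbar ^ 2 * L / ξ) ^ 2 / T := by
          simp only [Finset.sum_const, Finset.card_univ, Fintype.card_fin, nsmul_eq_mul]
          field_simp
  calc (∑ i, w i * ∑ s, (a ⬝ᵥ F s) * u i s) ^ 2
      ≤ (∑ i, w i ^ 2) * ∑ i, (∑ s, (a ⬝ᵥ F s) * u i s) ^ 2 :=
        Finset.sum_mul_sq_le_sq_mul_sq _ _ _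
    _ ≤ (∑ i, w i ^ 2) * ∑ i, ((Fbar ^ 2 * L / ξ) ^ 2 / T) * ∑ s, u i s ^ 2 := by
        gcongr with i
        exact (Finset.sum_mul_sq_le_sq_mul_sq _ _ _).trans (by gcongr)
    _ = _ := by rw [← Finset.mul_sum]; ring
end
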